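/- For all integers n and k with 0 ≤ 2k ≤ n, the iterated map ds_n^{(k)} : J_n → J_{n−2k} is surjective. -/

import Mathlib

/-!
Common setup: `R n` is the ring of Laurent polynomials
`ℤ[x₁^{±1}, …, xₙ^{±1}]`, realized as the group algebra over `ℤ` of the
group `ℤ^n` of exponent vectors (`AddMonoidAlgebra ℤ (Fin n → ℤ)`).
-/

noncomputable section

/-- The ring `Rₙ = ℤ[x₁^{±1}, …, xₙ^{±1}]` of Laurent polynomials in `n` variables. -/
abbrev R (n : ℕ) : Type := AddMonoidAlgebra ℤ (Fin n → ℤ)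

/-- The variable `xᵢ` of `R n` (`i` is a `0`-based index). -/
def X {n : ℕ} (i : Fin n) : R n := AddMonoidAlgebra.single (Pi.single i (1 : ℤ)) 1

/-- The inverse `xᵢ⁻¹` of the variable `xᵢ` of `R n`. -/
def Xinv {n : ℕ} (i : Fin n) : R n := AddMonoidAlgebra.single (Pi.single i (-1 : ℤ)) 1

/-- The action of a permutation `w` on exponent vectors. -/
def permExp {n : ℕ} (w : Equiv.Perm (Fin n)) : (Fin n → ℤ) →+ (Fin n → ℤ) :=
  AddMonoidHom.mk' (fun m => m ∘ w.symm) (fun _ _ => rfl)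

/-- The action of `w ∈ Sₙ` on `R n`, permuting the variables (`xᵢ ↦ x_{w i}`). -/
def permHom {n : ℕ} (w : Equiv.Perm (Fin n)) : R n →+* R n :=
  AddMonoidAlgebra.mapDomainRingHom ℤ (permExp w)

/-- `f` is a symmetric Laurent polynomial, i.e. `f ∈ Rₙ^{Sₙ}`. -/
def SymmP {n : ℕ} (f : R n) : Prop := ∀ w : Equiv.Perm (Fin n), permHom w f = f

/-- The map of exponent groups underlying the evaluation
`xᵢ ↦ xᵢ (1 ≤ i ≤ n-2), x_{n-1} ↦ t, xₙ ↦ t⁻¹`; the second coordinate of the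
target records the exponent of `t`. -/
def evExp (n : ℕ) : (Fin n → ℤ) →+ ((Fin (n - 2) → ℤ) × ℤ) :=
  AddMonoidHom.mk'
    (fun m => (fun i => m (Fin.castLE (Nat.sub_le n 2) i),
      if h : 2 ≤ n then m ⟨n - 2, by omega⟩ - m ⟨n - 1, by omega⟩ else 0))
    (by
      intro a b
      refine Prod.ext (funext fun i => rfl) ?_
      by_cases h : 2 ≤ n
      · simp [h]; ring
      · simp [h])

/-- The evaluation homomorphism
`evₙ : ℤ[x₁^{±1},…,xₙ^{±1}] → ℤ[x₁^{±1},…,x_{n-2}^{±1}, t^{±1}]` determined by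
`xᵢ ↦ xᵢ` for `1 ≤ i ≤ n-2`, `x_{n-1} ↦ t`, `xₙ ↦ t⁻¹`.  The target is realized
as the group algebra of `ℤ^{n-2} × ℤ`, the last factor recording the exponent
of `t`. -/
def ev (n : ℕ) : R n →+* AddMonoidAlgebra ℤ ((Fin (n - 2) → ℤ) × ℤ) :=
  AddMonoidAlgebra.mapDomainRingHom ℤ (evExp n)

/-- An element of `ℤ[x₁^{±1},…,x_{n-2}^{±1}, t^{±1}]` "does not involve `t`",
i.e. it lies in the image of the subring `ℤ[x₁^{±1},…,x_{n-2}^{±1}]`. -/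
def NoT (n : ℕ) (g : AddMonoidAlgebra ℤ ((Fin (n - 2) → ℤ) × ℤ)) : Prop :=
  g ∈ Set.range
    (AddMonoidAlgebra.mapDomainRingHom ℤ (AddMonoidHom.inl (Fin (n - 2) → ℤ) ℤ))

/-- `J n`: for `n ≥ 2`, the set of symmetric Laurent polynomials `f` such that
`evₙ f` does not involve `t`; for `n = 0, 1` it is all of `Rₙ^{Sₙ}`. -/
def J (n : ℕ) : Set (R n) := {f | SymmP f ∧ (2 ≤ n → NoT n (ev n f))}

/-- Restriction of exponent vectors to the first `n - 2` coordinates. -/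
def resExp (n : ℕ) : (Fin n → ℤ) →+ (Fin (n - 2) → ℤ) :=
  AddMonoidHom.mk' (fun m i => m (Fin.castLE (Nat.sub_le n 2) i)) (fun _ _ => rfl)

/-- The ring homomorphism `R n → R (n-2)` which, on `J n`, is the
Duflo–Serganova map `dsₙ`: for `f ∈ J n` it is exactly `evₙ f` regarded as an
element of `ℤ[x₁^{±1},…,x_{n-2}^{±1}]` (the `t`-degree-`0` part of `evₙ f`). -/
def ds (n : ℕ) : R n →+* R (n - 2) :=
  AddMonoidAlgebra.mapDomainRingHom ℤ (resExp n)

/-- The product `∏_{1 ≤ i < j ≤ n} (1 - xᵢ xⱼ)`. -/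
def P (n : ℕ) : R n :=
  ∏ p ∈ Finset.univ.filter (fun p : Fin n × Fin n => p.1 < p.2), (1 - X p.1 * X p.2)

/-- The iterated Duflo–Serganova map
`dsₙ^{(k)} = ds_{n-2k+2} ∘ ⋯ ∘ ds_{n-2} ∘ dsₙ : Rₙ → R_{n-2k}`, with
`dsₙ^{(0)}` the identity. -/
def dsIter (n : ℕ) : (k : ℕ) → R n →+* R (n - 2 * k)
  | 0 => RingHom.id (R n)
  | k + 1 => (ds (n - 2 * k)).comp (dsIter n k)

/-! ### Evaluation of Laurent polynomials at points -/

/-- Evaluation at a character of the exponent group. -/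
def EC {M : Type} [AddCommGroup M] (χ : Multiplicative M →* ℚ) : AddMonoidAlgebra ℤ M →+* ℚ :=
  (AddMonoidAlgebra.lift ℤ ℚ M χ).toRingHom

lemma EC_single {M : Type} [AddCommGroup M] (χ : Multiplicative M →* ℚ) (m : M) (c : ℤ) :
    EC χ (AddMonoidAlgebra.single m c) = c * χ (Multiplicative.ofAdd m) := by
  show AddMonoidAlgebra.lift ℤ ℚ M χ _ = _
  rw [AddMonoidAlgebra.lift_single, zsmul_eq_mul]

lemma EC_map {M N : Type} [AddCommGroup M] [AddCommGroup N] (χ : Multiplicative N →* ℚ)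
    (χ' : Multiplicative M →* ℚ) (φ : M →+ N)
    (h : ∀ m, χ (Multiplicative.ofAdd (φ m)) = χ' (Multiplicative.ofAdd m))
    (f : AddMonoidAlgebra ℤ M) :
    EC χ (AddMonoidAlgebra.mapDomainRingHom ℤ φ f) = EC χ' f := by
  have : (EC χ).comp (AddMonoidAlgebra.mapDomainRingHom ℤ φ) = EC χ' := by
    apply AddMonoidAlgebra.ringHom_ext
    · intro r
      simp [EC_single, AddMonoidAlgebra.mapDomain_single]
    · intro m
      simp [EC_single, AddMonoidAlgebra.mapDomain_single, h]
  exact DFunLike.congr_fun this f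

/-- Dedekind: a Laurent polynomial vanishing at all points is zero. -/
lemma EC_zero {M G : Type} [AddCommGroup M] [CommGroup G] (χ : G → (Multiplicative M →* ℚ))
    (b : M → (G →* ℚ)) (hb : ∀ m x, b m x = χ x (Multiplicative.ofAdd m))
    (hinj : Function.Injective b) (f : AddMonoidAlgebra ℤ M) (h : ∀ x, EC (χ x) f = 0) :
    f = 0 := by
  have hli := (linearIndependent_monoidHom G ℚ).comp b hinj
  have h2 : f.coeff.mapRange (Int.cast : ℤ → ℚ) Int.cast_zero = 0 := by
    rw [linearIndependent_iff] at hli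
    apply hli
    ext x
    have := h x
    change AddMonoidAlgebra.lift ℤ ℚ M (χ x) f = 0 at this
    rw [AddMonoidAlgebra.lift_apply] at this
    rw [Finsupp.linearCombination_apply, Finsupp.sum_mapRange_index (by simp)]
    simp only [Finsupp.sum, Finset.sum_apply, Pi.smul_apply, Function.comp, hb, Pi.zero_apply]
    simpa [Finsupp.sum] using this
  ext m
  have := DFunLike.congr_fun h2 m
  simpa using this

/-- The character of `ℤ^n` attached to a point of the torus. -/
def chr {n : ℕ} (x : Fin n → ℚˣ) : Multiplicative (Fin n → ℤ) →* ℚ where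
  toFun m := ((∏ i, x i ^ (Multiplicative.toAdd m i) : ℚˣ) : ℚ)
  map_one' := by simp
  map_mul' a b := by simp [zpow_add, Finset.prod_mul_distrib]

lemma chr_apply {n : ℕ} (x : Fin n → ℚˣ) (m : Fin n → ℤ) :
    chr x (Multiplicative.ofAdd m) = ((∏ i, x i ^ (m i) : ℚˣ) : ℚ) := rfl

/-- The character of `ℤ^n × ℤ` attached to a point of the torus. -/
def chr2 {n : ℕ} (x : (Fin n → ℚˣ) × ℚˣ) : Multiplicative ((Fin n → ℤ) × ℤ) →* ℚ where
  toFun m := (((∏ i, x.1 i ^ ((Multiplicative.toAdd m).1 i)) * x.2 ^ (Multiplicative.toAdd m).2 : ℚˣ) : ℚ)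
  map_one' := by simp
  map_mul' a b := by
    simp [zpow_add, Finset.prod_mul_distrib]
    ring

lemma chr2_apply {n : ℕ} (x : (Fin n → ℚˣ) × ℚˣ) (m : (Fin n → ℤ) × ℤ) :
    chr2 x (Multiplicative.ofAdd m) = (((∏ i, x.1 i ^ (m.1 i)) * x.2 ^ m.2 : ℚˣ) : ℚ) := rfl

/-- Evaluation of a Laurent polynomial at a point of the torus. -/
def E {n : ℕ} (x : Fin n → ℚˣ) : R n →+* ℚ := EC (chr x)

/-- Evaluation of a Laurent polynomial with the additional variable `t`. -/
def E2 {n : ℕ} (x : (Fin n → ℚˣ) × ℚˣ) : AddMonoidAlgebra ℤ ((Fin n → ℤ) × ℤ) →+* ℚ :=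
  EC (chr2 x)

/-- The unit `2`. -/
def two : ℚˣ := Units.mk0 2 (by norm_num)

lemma two_zpow_inj {a b : ℤ} (h : two ^ a = two ^ b) : a = b := by
  have h2 : (2 : ℚ) ^ a = 2 ^ b := by
    have := congrArg (fun u : ℚˣ => (u : ℚ)) h
    simpa [two] using this
  exact zpow_right_injective₀ (by norm_num) (by norm_num) h2

lemma E_zero {n : ℕ} (f : R n) (h : ∀ x, E x f = 0) : f = 0 := by
  refine EC_zero (G := Fin n → ℚˣ) chr
    (fun m => ⟨⟨fun x => chr x (Multiplicative.ofAdd m), ?_⟩, ?_⟩) (fun m x => rfl) ?_ f h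
  · simp [chr_apply]
  · intro x y
    simp [chr_apply, mul_zpow, Finset.prod_mul_distrib]
  · intro a b hab
    funext i
    have := DFunLike.congr_fun hab (Pi.mulSingle i two)
    simp only [MonoidHom.coe_mk, OneHom.coe_mk, chr_apply, Units.val_inj] at this
    rw [Finset.prod_eq_single i, Finset.prod_eq_single i] at this
    · simpa using two_zpow_inj (by simpa using this)
    · intro j _ hj; simp [Pi.mulSingle_eq_of_ne hj]
    · simp
    · intro j _ hj; simp [Pi.mulSingle_eq_of_ne hj]
    · simp

lemma E2_zero {n : ℕ} (f : AddMonoidAlgebra ℤ ((Fin n → ℤ) × ℤ)) (h : ∀ x, E2 x f = 0) :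
    f = 0 := by
  refine EC_zero (G := (Fin n → ℚˣ) × ℚˣ) chr2
    (fun m => ⟨⟨fun x => chr2 x (Multiplicative.ofAdd m), ?_⟩, ?_⟩) (fun m x => rfl) ?_ f h
  · simp [chr2_apply]
  · intro x y
    simp [chr2_apply, mul_zpow, Finset.prod_mul_distrib]
    ring
  · intro a b hab
    refine Prod.ext (funext fun i => ?_) ?_
    · have := DFunLike.congr_fun hab (Pi.mulSingle i two, 1)
      simp only [MonoidHom.coe_mk, OneHom.coe_mk, chr2_apply, Units.val_inj, one_zpow, mul_one]
        at this
      rw [Finset.prod_eq_single i, Finset.prod_eq_single i] at this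
      · simpa using two_zpow_inj (by simpa using this)
      · intro j _ hj; simp [Pi.mulSingle_eq_of_ne hj]
      · simp
      · intro j _ hj; simp [Pi.mulSingle_eq_of_ne hj]
      · simp
    · have := DFunLike.congr_fun hab (1, two)
      simp only [MonoidHom.coe_mk, OneHom.coe_mk, chr2_apply, Units.val_inj, Pi.one_apply,
        one_zpow, Finset.prod_const_one, one_mul] at this
      exact two_zpow_inj this

lemma E_ext {n : ℕ} {f g : R n} (h : ∀ x, E x f = E x g) : f = g := by
  rw [← sub_eq_zero]
  exact E_zero _ fun x => by rw [map_sub, h x, sub_self]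

lemma E_X {n : ℕ} (x : Fin n → ℚˣ) (i : Fin n) : E x (X i) = x i := by
  rw [E, X, EC_single, chr_apply, Finset.prod_eq_single i]
  · simp
  · intro j _ hj; simp [Pi.single_eq_of_ne hj]
  · simp

lemma E_perm {n : ℕ} (x : Fin n → ℚˣ) (w : Equiv.Perm (Fin n)) (f : R n) :
    E x (permHom w f) = E (x ∘ w) f := by
  refine EC_map _ _ _ (fun m => ?_) f
  rw [chr_apply, chr_apply]
  congr 1
  rw [← Equiv.prod_comp w]
  simp [permExp]

lemma SymmP_iff {n : ℕ} (f : R n) :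
    SymmP f ↔ ∀ (w : Equiv.Perm (Fin n)) x, E (x ∘ w) f = E x f := by
  constructor
  · intro h w x
    rw [← E_perm, h w]
  · intro h w
    exact E_ext fun x => by rw [E_perm, h]

/-- The exponent map of the substitution attached to a map of indices. -/
def pushExp {m n : ℕ} (r : Fin m → Fin n) : (Fin m → ℤ) →+ (Fin n → ℤ) :=
  AddMonoidHom.mk' (fun a i => ∑ j, if r j = i then a j else 0) (by
    intro a b
    funext i
    simp only [Pi.add_apply, ← Finset.sum_add_distrib]
    refine Finset.sum_congr rfl fun j _ => ?_
    split_ifs <;> simp)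

/-- The substitution `x_j ↦ x_{r j}`. -/
def push {m n : ℕ} (r : Fin m → Fin n) : R m →+* R n :=
  AddMonoidAlgebra.mapDomainRingHom ℤ (pushExp r)

lemma E_push {m n : ℕ} (r : Fin m → Fin n) (x : Fin n → ℚˣ) (f : R m) :
    E x (push r f) = E (x ∘ r) f := by
  refine EC_map _ _ _ (fun a => ?_) f
  rw [chr_apply, chr_apply]
  congr 1
  have h1 : ∀ i, x i ^ (pushExp r a i) = ∏ j, if r j = i then x i ^ a j else 1 := by
    intro i
    have : pushExp r a i = ∑ j, if r j = i then a j else 0 := rfl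
    rw [this]
    have h2 : ∀ s : Finset (Fin m), x i ^ (∑ j ∈ s, if r j = i then a j else 0)
        = ∏ j ∈ s, if r j = i then x i ^ a j else 1 := by
      intro s
      induction s using Finset.induction_on with
      | empty => simp
      | insert b s hb ih =>
        rw [Finset.sum_insert hb, Finset.prod_insert hb, zpow_add, ih]
        split_ifs <;> simp
    exact h2 _
  rw [Finset.prod_congr rfl fun i _ => h1 i, Finset.prod_comm]
  simp

lemma push_X {m n : ℕ} (r : Fin m → Fin n) (i : Fin m) : push r (X i) = X (r i) :=
  E_ext fun x => by simp [E_push, E_X]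

/-! ### Vandermonde -/

/-- The index set of pairs `i < j`. -/
def prs (n : ℕ) : Finset (Fin n × Fin n) := Finset.univ.filter (fun p => p.1 < p.2)

/-- The Vandermonde product. -/
def Van (n : ℕ) : R n := ∏ p ∈ prs n, (X p.2 - X p.1)

lemma X_sub_ne {n : ℕ} {i j : Fin n} (h : i ≠ j) : (X i - X j : R n) ≠ 0 := by
  intro h0
  have := congrArg (E (Pi.mulSingle i two)) h0
  rw [map_sub, E_X, E_X, map_zero, Pi.mulSingle_eq_same, Pi.mulSingle_eq_of_ne h.symm] at this
  norm_num [two] at this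

lemma Van_ne {n : ℕ} : Van n ≠ 0 := by
  rw [Van, Finset.prod_ne_zero_iff]
  intro p hp
  simp only [prs, Finset.mem_filter] at hp
  exact X_sub_ne hp.2.ne'

lemma E_Van {n : ℕ} (x : Fin n → ℚˣ) :
    E x (Van n) = ∏ p ∈ prs n, ((x p.2 : ℚ) - x p.1) := by
  simp [Van, E_X]

lemma E_Van_ne {n : ℕ} (x : Fin n → ℚˣ) : E x (Van n) ≠ 0 ↔ Function.Injective x := by
  rw [E_Van, Finset.prod_ne_zero_iff]
  constructor
  · intro h i j hij
    by_contra hne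
    rcases lt_or_gt_of_ne hne with hl | hl
    · exact h (i, j) (by simp [prs, hl]) (by simp [hij])
    · exact h (j, i) (by simp [prs, hl]) (by simp [hij])
  · intro h p hp h0
    simp only [prs, Finset.mem_filter] at hp
    exact hp.2.ne' (h (Units.ext (sub_eq_zero.mp h0)))

lemma E_ext_inj {n : ℕ} {f g : R n} (h : ∀ x, Function.Injective x → E x f = E x g) : f = g := by
  have : (f - g) * Van n = 0 := by
    refine E_zero _ fun x => ?_
    rw [map_mul, map_sub]
    by_cases hx : Function.Injective x
    · rw [h x hx, sub_self, zero_mul]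
    · have := (E_Van_ne x).not.mpr hx
      rw [not_not.mp this, mul_zero]
  rcases mul_eq_zero.mp this with h1 | h1
  · exact sub_eq_zero.mp h1
  · exact absurd h1 Van_ne

lemma E_Van_swap {n : ℕ} (x : Fin n → ℚˣ) {a b : Fin n} (hab : a ≠ b) :
    E (x ∘ Equiv.swap a b) (Van n) = - E x (Van n) := by
  have key : ∀ y : Fin n → ℚˣ, E y (Van n) = (Matrix.vandermonde (fun i => (y i : ℚ))).det := by
    intro y
    rw [E_Van, Matrix.det_vandermonde, prs, Finset.prod_filter, ← Finset.univ_product_univ,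
      Finset.prod_product]
    refine Finset.prod_congr rfl fun i _ => ?_
    rw [← Finset.prod_filter]
    refine Finset.prod_congr ?_ fun _ _ => rfl
    ext; simp
  rw [key, key]
  have := Matrix.det_permute (Equiv.swap a b) (Matrix.vandermonde (fun i => (x i : ℚ)))
  rw [Equiv.Perm.sign_swap hab] at this
  simp only [Units.val_neg, Units.val_one, Int.cast_neg, Int.cast_one, neg_mul, one_mul] at this
  rw [← this]
  rfl

/-- Identify the variables `a` and `b`. -/
def ident {n : ℕ} (a b : Fin n) : Fin n → Fin n := fun i => if i = b then a else i

lemma monHom_ext {n : ℕ} {Q : Type} [CommRing Q] (u v : Multiplicative (Fin n → ℤ) →* Q)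
    (h : ∀ i, u (Multiplicative.ofAdd (Pi.single i 1)) = v (Multiplicative.ofAdd (Pi.single i 1))) :
    u = v := by
  refine MonoidHom.ext fun m => ?_
  change m ∈ MonoidHom.eqLocus u v
  have hm : m = ∏ i, (Multiplicative.ofAdd (Pi.single i (1 : ℤ) : Fin n → ℤ))
      ^ (Multiplicative.toAdd m i) := by
    apply Multiplicative.toAdd.injective
    rw [toAdd_prod]
    simp only [toAdd_zpow, toAdd_ofAdd]
    funext j
    simp [Finset.sum_apply, Pi.single_apply]
  rw [hm]
  exact Subgroup.prod_mem _ fun i _ => Subgroup.zpow_mem _ (h i) _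

lemma dvd_of_ident {n : ℕ} (a b : Fin n) (f : R n) (h : push (ident a b) f = 0) :
    (X b - X a) ∣ f := by
  let I : Ideal (R n) := Ideal.span {X b - X a}
  have key : (Ideal.Quotient.mk I).comp (push (ident a b)) = Ideal.Quotient.mk I := by
    apply AddMonoidAlgebra.ringHom_ext'
    · exact RingHom.ext_int _ _
    · have : ∀ i : Fin n, (Ideal.Quotient.mk I) (push (ident a b) (X i)) = Ideal.Quotient.mk I (X i) := by
        intro i
        rw [push_X, ident]
        split_ifs with hi
        · subst hi
          symm
          rw [Ideal.Quotient.eq]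
          exact Ideal.mem_span_singleton_self _
        · rfl
      exact monHom_ext _ _ this
  have h2 := DFunLike.congr_fun key f
  rw [RingHom.comp_apply, h, map_zero] at h2
  exact Ideal.mem_span_singleton.mp (Ideal.Quotient.eq_zero_iff_mem.mp h2.symm)

lemma Van_dvd {n : ℕ} (A : R n)
    (h : ∀ a b, a ≠ b → ∀ x : Fin n → ℚˣ, Function.Injective x →
      E (x ∘ Equiv.swap a b) A = - E x A) : Van n ∣ A := by
  have h0 : ∀ a b, a ≠ b → push (ident a b) A = 0 := by
    intro a b hab
    have h1 : permHom (Equiv.swap a b) A = - A :=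
      E_ext_inj fun x hx => by rw [E_perm, h a b hab x hx, map_neg]
    have h2 : push (ident a b) (permHom (Equiv.swap a b) A) = push (ident a b) A := by
      refine E_ext fun x => ?_
      rw [E_push, E_perm, E_push]
      congr 2
      funext i
      simp only [Function.comp, ident]
      congr 1
      rcases eq_or_ne i a with rfl | hia
      · simp
      · rcases eq_or_ne i b with rfl | hib
        · simp [hab]
        · rw [Equiv.swap_apply_of_ne_of_ne hia hib]
    rw [h1, map_neg] at h2
    refine E_zero _ fun x => ?_
    have h3 := congrArg (E x) h2
    rw [map_neg] at h3
    linarith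
  have key : ∀ s : Finset (Fin n × Fin n), s ⊆ prs n → ∏ p ∈ s, (X p.2 - X p.1) ∣ A := by
    intro s
    induction s using Finset.induction_on with
    | empty => simp
    | insert q s hq ih =>
      intro hs
      have hs' : s ⊆ prs n := fun p hp => hs (Finset.mem_insert_of_mem hp)
      have hqp : q ∈ prs n := hs (Finset.mem_insert_self _ _)
      simp only [prs, Finset.mem_filter, Finset.mem_univ, true_and] at hqp
      obtain ⟨B, hB⟩ := ih hs'
      have h1 := h0 q.1 q.2 hqp.ne
      rw [hB, map_mul, map_prod] at h1
      have h2 : ∏ p ∈ s, push (ident q.1 q.2) (X p.2 - X p.1) ≠ 0 := by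
        rw [Finset.prod_ne_zero_iff]
        intro p hp
        have hpl := hs' hp
        simp only [prs, Finset.mem_filter, Finset.mem_univ, true_and] at hpl
        have hpq : p ≠ q := fun hpq => hq (hpq ▸ hp)
        rw [map_sub, push_X, push_X]
        apply X_sub_ne
        obtain ⟨p1, p2⟩ := p
        obtain ⟨q1, q2⟩ := q
        simp only [ident, ne_eq, Prod.mk.injEq] at *
        intro h5
        split_ifs at h5 <;> omega
      have h3 := (mul_eq_zero.mp h1).resolve_left h2
      obtain ⟨C, hC⟩ := dvd_of_ident _ _ _ h3
      rw [Finset.prod_insert hq, hB, hC]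
      exact ⟨C, by ring⟩
  exact key _ (Finset.Subset.refl _)

/-! ### The lifting operator on functions of finite sets of points -/

/-- The weight. -/
def wt (T U : Finset ℚˣ) : ℚ := ∏ a ∈ T, ∏ b ∈ U, (1 - (a : ℚ) * b) / ((a : ℚ) - b)

/-- The value of a symmetric Laurent polynomial in `m` variables at a finite set of points
(zero if the set does not have exactly `m` elements). -/
def val (m : ℕ) (g : R m) (T : Finset ℚˣ) : ℚ :=
  if h : T.card = m then E (fun i => ((T.equivFinOfCardEq h).symm i : ℚˣ)) g else 0

lemma val_of_card_ne {m : ℕ} (g : R m) {T : Finset ℚˣ} (h : T.card ≠ m) : val m g T = 0 := by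
  rw [val, dif_neg h]

lemma val_eq {m : ℕ} {g : R m} (hg : SymmP g) (y : Fin m → ℚˣ) (hy : Function.Injective y)
    (T : Finset ℚˣ) (hT : Finset.univ.image y = T) : val m g T = E y g := by
  have hc : T.card = m := by rw [← hT, Finset.card_image_of_injective _ hy]; simp
  rw [val, dif_pos hc]
  let e := (T.equivFinOfCardEq hc).symm
  let f : Fin m ≃ T := Equiv.ofBijective (fun i => ⟨y i, by rw [← hT]; simp⟩) (by
    constructor
    · intro i j hij
      exact hy (congrArg Subtype.val hij)
    · rintro ⟨t, ht⟩
      have ht' := ht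
      rw [← hT] at ht'
      simp only [Finset.mem_image, Finset.mem_univ, true_and] at ht'
      obtain ⟨i, hi⟩ := ht'
      exact ⟨i, Subtype.ext hi⟩)
  rw [← (SymmP_iff g).mp hg (e.trans f.symm) y]
  congr 2
  funext i
  have : (f (f.symm (e i)) : ℚˣ) = e i := by rw [Equiv.apply_symm_apply]
  exact this.symm

/-- The lifted function. -/
def FF (m : ℕ) (g : R m) (S : Finset ℚˣ) : ℚ := ∑ T ∈ S.powerset, val m g T * wt T (S \ T)

lemma prod_pairs {n : ℕ} (v : Fin n → Fin n → ℚ) (hv : ∀ i, v i i = 1) :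
    ∏ i, ∏ j, v i j = ∏ p ∈ prs n, v p.1 p.2 * v p.2 p.1 := by
  rw [← Fintype.prod_prod_type', Finset.prod_mul_distrib]
  rw [← Finset.prod_filter_mul_prod_filter_not Finset.univ (fun p : Fin n × Fin n => p.1 < p.2)]
  congr 1
  rw [← Finset.prod_filter_mul_prod_filter_not _ (fun p : Fin n × Fin n => p.2 < p.1)]
  rw [Finset.prod_eq_one (s := Finset.filter (fun p : Fin n × Fin n => ¬ p.2 < p.1) _), mul_one]
  · refine Finset.prod_bij (fun p _ => (p.2, p.1)) ?_ ?_ ?_ ?_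
    · intro p hp
      simp only [Finset.mem_filter, prs, Finset.mem_univ, true_and] at hp ⊢
      exact hp.2
    · rintro ⟨a, b⟩ _ ⟨c, d⟩ _ h
      simp only [Prod.mk.injEq] at h ⊢
      exact ⟨h.2, h.1⟩
    · rintro ⟨a, b⟩ h
      simp only [Finset.mem_filter, prs, Finset.mem_univ, true_and] at h
      exact ⟨(b, a), by simp [h, h.le], rfl⟩
    · intro p _; rfl
  · rintro ⟨a, b⟩ h
    simp only [Finset.mem_filter, Finset.mem_univ, true_and] at h
    have : a = b := le_antisymm (not_lt.mp h.2) (not_lt.mp h.1)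
    subst this
    exact hv a

/-- The factors in the numerator. -/
def piece {n : ℕ} (s : Finset (Fin n)) (i j : Fin n) : R n :=
  if i ∈ s ∧ j ∉ s then -(1 - X i * X j) else if j ∈ s ∧ i ∉ s then 1 - X i * X j else X j - X i

lemma E_pieces {n : ℕ} (s : Finset (Fin n)) (x : Fin n → ℚˣ) (hx : Function.Injective x) :
    E x (∏ p ∈ prs n, piece s p.1 p.2) = E x (Van n) * wt (s.image x) (sᶜ.image x) := by
  have h1 : wt (s.image x) (sᶜ.image x) = ∏ i, ∏ j, (if i ∈ s ∧ j ∉ s then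
      (1 - (x i : ℚ) * x j) / ((x i : ℚ) - x j) else 1) := by
    rw [wt, Finset.prod_image hx.injOn]
    simp_rw [Finset.prod_image hx.injOn]
    rw [← Finset.prod_subset (Finset.subset_univ s)]
    · refine Finset.prod_congr rfl fun i hi => ?_
      rw [← Finset.prod_subset (Finset.subset_univ sᶜ)]
      · refine Finset.prod_congr rfl fun j hj => ?_
        rw [if_pos ⟨hi, Finset.mem_compl.mp hj⟩]
      · intro j _ hj
        rw [if_neg]
        simp at hj; tauto
    · intro i _ hi
      exact Finset.prod_eq_one fun j _ => by rw [if_neg]; tauto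
  rw [h1, prod_pairs _ (by intro i; rw [if_neg]; tauto), E_Van, map_prod, ← Finset.prod_mul_distrib]
  refine Finset.prod_congr rfl fun p hp => ?_
  simp only [prs, Finset.mem_filter, Finset.mem_univ, true_and] at hp
  have hne : (x p.2 : ℚ) - x p.1 ≠ 0 := by
    intro h0
    exact hp.ne' (hx (Units.ext (sub_eq_zero.mp h0)))
  have hne' : (x p.1 : ℚ) - x p.2 ≠ 0 := by
    intro h0
    exact hp.ne (hx (Units.ext (sub_eq_zero.mp h0)))
  rw [piece]
  by_cases ha : p.1 ∈ s <;> by_cases hb : p.2 ∈ s <;> simp [ha, hb, E_X]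
  · field_simp
    ring
  · field_simp

lemma poly {m : ℕ} (g : R m) (hg : SymmP g) (n : ℕ) :
    ∃ f : R n, SymmP f ∧ ∀ x : Fin n → ℚˣ, Function.Injective x →
      E x f = FF m g (Finset.univ.image x) := by
  let A : R n := ∑ s : Finset (Fin n), (if h : s.card = m then push (s.orderEmbOfFin h) g else 0) *
    ∏ p ∈ prs n, piece s p.1 p.2
  have hA : ∀ x : Fin n → ℚˣ, Function.Injective x →
      E x A = E x (Van n) * FF m g (Finset.univ.image x) := by
    intro x hx
    rw [map_sum, FF, Finset.mul_sum]
    refine Finset.sum_bij (fun s _ => s.image x) ?_ ?_ ?_ ?_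
    · intro s _
      simp only [Finset.mem_powerset]
      exact Finset.image_subset_image (Finset.subset_univ s)
    · intro s _ t _ hst
      exact Finset.image_injective hx hst
    · intro T hT
      rw [Finset.mem_powerset, Finset.subset_image_iff] at hT
      obtain ⟨s, _, hs⟩ := hT
      exact ⟨s, Finset.mem_univ _, hs⟩
    · intro s _
      rw [map_mul, E_pieces s x hx]
      have h1 : Finset.univ.image x \ s.image x = sᶜ.image x := by
        rw [← Finset.image_sdiff _ _ hx]; rfl
      rw [h1]
      have h2 : E x (if h : s.card = m then push (s.orderEmbOfFin h) g else 0)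
          = val m g (s.image x) := by
        split_ifs with h
        · rw [E_push]
          symm
          apply val_eq hg
          · exact hx.comp (s.orderEmbOfFin h).injective
          · rw [← Finset.image_image]
            congr 1
            simp
        · rw [map_zero, val_of_card_ne]
          rwa [Finset.card_image_of_injective _ hx]
      rw [h2]; ring
  have himg : ∀ (x : Fin n → ℚˣ) (w : Equiv.Perm (Fin n)),
      Finset.univ.image (x ∘ w) = Finset.univ.image x := by
    intro x w
    rw [← Finset.image_image]
    congr 1
    simp
  obtain ⟨f, hf⟩ : Van n ∣ A := by
    apply Van_dvd
    intro a b hab x hx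
    rw [hA x hx, hA _ (hx.comp (Equiv.injective _)), E_Van_swap x hab, himg]
    ring
  have hfx : ∀ x : Fin n → ℚˣ, Function.Injective x →
      E x f = FF m g (Finset.univ.image x) := by
    intro x hx
    have := hA x hx
    rw [hf, map_mul] at this
    exact mul_left_cancel₀ ((E_Van_ne x).mpr hx) this
  refine ⟨f, fun w => E_ext_inj fun x hx => ?_, hfx⟩
  rw [E_perm, hfx x hx, hfx _ (hx.comp (Equiv.injective _)), himg]

/-! ### The key identity -/

lemma wt_insert_left {a : ℚˣ} {T U : Finset ℚˣ} (h : a ∉ T) :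
    wt (insert a T) U = (∏ b ∈ U, (1 - (a : ℚ) * b) / ((a : ℚ) - b)) * wt T U := by
  rw [wt, Finset.prod_insert h, wt]

lemma wt_insert_right {b : ℚˣ} {T U : Finset ℚˣ} (h : b ∉ U) :
    wt T (insert b U) = (∏ a ∈ T, (1 - (a : ℚ) * b) / ((a : ℚ) - b)) * wt T U := by
  rw [wt, wt, ← Finset.prod_mul_distrib]
  exact Finset.prod_congr rfl fun a _ => Finset.prod_insert h

lemma wt_zero {a b : ℚˣ} {T U : Finset ℚˣ} (ha : a ∈ T) (hb : b ∈ U) (h : a * b = 1) :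
    wt T U = 0 := by
  rw [wt]
  refine Finset.prod_eq_zero ha (Finset.prod_eq_zero hb ?_)
  rw [← Units.val_mul, h]; simp

lemma FF_insert {m : ℕ} (g : R m) (S : Finset ℚˣ) (t : ℚˣ) (ht : t ∉ S) (ht' : t⁻¹ ∉ S)
    (htt : t ≠ t⁻¹) :
    FF m g (insert t (insert t⁻¹ S)) = FF m g S +
      ∑ T ∈ S.powerset, val m g (insert t (insert t⁻¹ T)) * wt T (S \ T) := by
  have ht2 : t ∉ insert t⁻¹ S := by simp [htt, ht]
  have hq : ∀ a ∈ S, (a : ℚ) - t ≠ 0 ∧ (a : ℚ) - (t⁻¹ : ℚˣ) ≠ 0 := by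
    intro a ha
    constructor
    · intro h0
      exact ht ((Units.ext (sub_eq_zero.mp h0)) ▸ ha)
    · intro h0
      exact ht' ((Units.ext (sub_eq_zero.mp h0)) ▸ ha)
  have ht0 : (t : ℚ) ≠ 0 := t.ne_zero
  rw [FF, Finset.sum_powerset_insert ht2, Finset.sum_powerset_insert ht',
    Finset.sum_powerset_insert ht']
  have e1 : ∑ T ∈ S.powerset, val m g T * wt T (insert t (insert t⁻¹ S) \ T) = FF m g S := by
    refine Finset.sum_congr rfl fun T hT => ?_
    rw [Finset.mem_powerset] at hT
    have h1 : insert t (insert t⁻¹ S) \ T = insert t (insert t⁻¹ (S \ T)) := by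
      rw [Finset.insert_sdiff_of_notMem _ (fun h => ht (hT h)),
        Finset.insert_sdiff_of_notMem _ (fun h => ht' (hT h))]
    rw [h1, wt_insert_right (by simp [htt, ht]), wt_insert_right (by simp [ht']), ← mul_assoc (∏ b ∈ _, _),
      ← Finset.prod_mul_distrib, Finset.prod_eq_one, one_mul]
    intro a ha
    obtain ⟨q1, q2⟩ := hq a (hT ha)
    rw [div_mul_div_comm, div_eq_one_iff_eq (mul_ne_zero q1 q2)]
    rw [Units.val_inv_eq_inv_val]
    field_simp
    ring
  have e2 : ∑ T ∈ S.powerset, val m g (insert t⁻¹ T) *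
      wt (insert t⁻¹ T) (insert t (insert t⁻¹ S) \ insert t⁻¹ T) = 0 := by
    refine Finset.sum_eq_zero fun T hT => ?_
    rw [Finset.mem_powerset] at hT
    rw [wt_zero (a := t⁻¹) (b := t) (by simp) _ (by simp), mul_zero]
    simp only [Finset.mem_sdiff, Finset.mem_insert, true_or, true_and, not_or]
    exact ⟨htt, fun h => ht (hT h)⟩
  have e3 : ∑ T ∈ S.powerset, val m g (insert t T) *
      wt (insert t T) (insert t (insert t⁻¹ S) \ insert t T) = 0 := by
    refine Finset.sum_eq_zero fun T hT => ?_
    rw [Finset.mem_powerset] at hT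
    rw [wt_zero (a := t) (b := t⁻¹) (by simp) _ (by simp), mul_zero]
    simp only [Finset.mem_sdiff, Finset.mem_insert, true_or, or_true, true_and, not_or]
    exact ⟨htt.symm, fun h => ht' (hT h)⟩
  rw [e1, e2, e3, add_zero, zero_add]
  congr 1
  refine Finset.sum_congr rfl fun T hT => ?_
  rw [Finset.mem_powerset] at hT
  have h1 : insert t (insert t⁻¹ S) \ insert t (insert t⁻¹ T) = S \ T := by
    ext a
    simp only [Finset.mem_sdiff, Finset.mem_insert, not_or]
    constructor
    · tauto
    · rintro ⟨h1, h2⟩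
      exact ⟨Or.inr (Or.inr h1), fun h => ht (h ▸ h1), fun h => ht' (h ▸ h1), h2⟩
  have htT : t ∉ T := fun h => ht (hT h)
  have htT' : t⁻¹ ∉ T := fun h => ht' (hT h)
  rw [h1, wt_insert_left (by simp [htt, htT]), wt_insert_left htT', ← mul_assoc (∏ b ∈ _, _),
      ← Finset.prod_mul_distrib, Finset.prod_eq_one, one_mul]
  intro a ha
  obtain ⟨q1, q2⟩ := hq a (Finset.mem_sdiff.mp ha).1
  have q1' : (t : ℚ) - a ≠ 0 := by rw [← neg_sub]; exact neg_ne_zero.mpr q1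
  have q2' : ((t⁻¹ : ℚˣ) : ℚ) - a ≠ 0 := by rw [← neg_sub]; exact neg_ne_zero.mpr q2
  rw [div_mul_div_comm, div_eq_one_iff_eq (mul_ne_zero q1' q2')]
  rw [Units.val_inv_eq_inv_val]
  field_simp

/-! ### `J` and `ds` in terms of points -/

/-- Append two coordinates. -/
def pt {n : ℕ} (x : Fin n → ℚˣ) (s t : ℚˣ) : Fin (n + 2) → ℚˣ :=
  Fin.snoc (α := fun _ => ℚˣ) (Fin.snoc (α := fun _ => ℚˣ) x s) t

/-- `ds (n + 2)` with its target written as `R n`. -/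
def ds' (n : ℕ) : R (n + 2) →+* R n := ds (n + 2)

/-- `ev (n + 2)` with its target written without subtraction. -/
def ev' (n : ℕ) : R (n + 2) →+* AddMonoidAlgebra ℤ ((Fin n → ℤ) × ℤ) := ev (n + 2)

/-- The inclusion of `R n`. -/
def inc (n : ℕ) : R n →+* AddMonoidAlgebra ℤ ((Fin n → ℤ) × ℤ) :=
  AddMonoidAlgebra.mapDomainRingHom ℤ (AddMonoidHom.inl (Fin n → ℤ) ℤ)

lemma E_ds {n : ℕ} (x : Fin n → ℚˣ) (f : R (n + 2)) : E x (ds' n f) = E (pt x 1 1) f := by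
  refine EC_map (chr x) (chr (pt x 1 1)) (resExp (n + 2)) (fun m => ?_) f
  erw [chr_apply]
  rw [chr_apply, Fin.prod_univ_castSucc, Fin.prod_univ_castSucc]
  simp [pt]
  rfl

lemma E2_ev {n : ℕ} (x : Fin n → ℚˣ) (t : ℚˣ) (f : R (n + 2)) :
    E2 (x, t) (ev' n f) = E (pt x t t⁻¹) f := by
  refine EC_map (chr2 (x, t)) (chr (pt x t t⁻¹)) (evExp (n + 2)) (fun m => ?_) f
  have : evExp (n + 2) m = ((fun i : Fin n => m i.castSucc.castSucc),
      m (Fin.castSucc (Fin.last n)) - m (Fin.last (n + 1))) := by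
    simp only [evExp, AddMonoidHom.mk'_apply]
    rw [dif_pos (by omega)]
    rfl
  rw [this]
  erw [chr2_apply]
  rw [chr_apply, Fin.prod_univ_castSucc, Fin.prod_univ_castSucc]
  simp [pt, zpow_sub, mul_assoc]

lemma E2_inc {n : ℕ} (x : Fin n → ℚˣ) (t : ℚˣ) (f : R n) : E2 (x, t) (inc n f) = E x f := by
  refine EC_map (chr2 (x, t)) (chr x) _ (fun m => ?_) f
  rw [chr2_apply, chr_apply]
  simp

lemma J_iff {n : ℕ} (f : R (n + 2)) :
    f ∈ J (n + 2) ↔ SymmP f ∧ ∀ x t, E (pt x t t⁻¹) f = E (pt x 1 1) f := by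
  constructor
  · rintro ⟨h1, h2⟩
    refine ⟨h1, fun x t => ?_⟩
    obtain ⟨h, hh⟩ := h2 (by omega)
    have hh' : inc n h = ev' n f := hh
    have key : ∀ t, E (pt x t t⁻¹) f = E x h := fun t => by rw [← E2_ev, ← hh', E2_inc]
    rw [key t, ← key 1, inv_one]
  · rintro ⟨h1, h2⟩
    refine ⟨h1, fun _ => ⟨ds' n f, ?_⟩⟩
    change inc n (ds' n f) = ev' n f
    rw [← sub_eq_zero]
    refine E2_zero _ fun ⟨x, t⟩ => ?_
    rw [map_sub, E2_ev, E2_inc, E_ds, h2, sub_self]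

lemma pt_inj {n : ℕ} (x : Fin n → ℚˣ) (s t : ℚˣ) :
    Function.Injective (pt x s t) ↔ (Function.Injective x ∧ s ∉ Set.range x) ∧
      t ≠ s ∧ t ∉ Set.range x := by
  rw [pt, Fin.snoc_injective_iff, Fin.snoc_injective_iff]
  refine and_congr Iff.rfl ?_
  rw [← not_iff_not]
  simp only [Set.mem_range, not_and_or, not_not, ne_eq]
  constructor
  · rintro ⟨i, hi⟩
    induction i using Fin.lastCases with
    | last => left; simpa using hi.symm
    | cast i => right; exact ⟨i, by simpa using hi⟩
  · rintro (h | ⟨i, hi⟩)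
    · exact ⟨Fin.last _, by simpa using h.symm⟩
    · exact ⟨i.castSucc, by simpa using hi⟩

lemma generic {n : ℕ} (f : R (n + 2)) (h : R n)
    (hyp : ∀ x t, Function.Injective (pt x t t⁻¹) → E (pt x t t⁻¹) f = E x h) :
    ∀ x t, E (pt x t t⁻¹) f = E x h := by
  have h1 : (ev' n f - inc n h) * ev' n (Van (n + 2)) = 0 := by
    refine E2_zero _ fun ⟨x, t⟩ => ?_
    rw [map_mul, map_sub, E2_ev, E2_inc, E2_ev]
    by_cases hx : Function.Injective (pt x t t⁻¹)
    · rw [hyp x t hx, sub_self, zero_mul]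
    · have := (E_Van_ne _).not.mpr hx
      rw [not_not.mp this, mul_zero]
  have h2 : ev' n (Van (n + 2)) ≠ 0 := by
    intro h0
    have h3 := congrArg (E2 ((fun i : Fin n => two ^ ((i : ℤ) + 2)), two)) h0
    rw [E2_ev, map_zero] at h3
    refine (E_Van_ne _).mpr ?_ h3
    rw [pt_inj]
    have t1 : two = two ^ (1 : ℤ) := by simp
    have t2 : two⁻¹ = two ^ (-1 : ℤ) := by simp
    refine ⟨⟨?_, ?_⟩, ?_, ?_⟩
    · intro i j hij
      have := two_zpow_inj hij
      ext; omega
    · rintro ⟨i, hi⟩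
      have := two_zpow_inj (hi.trans t1)
      omega
    · rw [t2]
      intro h
      have := two_zpow_inj (h.trans t1)
      omega
    · rintro ⟨i, hi⟩
      have := two_zpow_inj (hi.trans t2)
      omega
  have h3 := (mul_eq_zero.mp h1).resolve_right h2
  intro x t
  have h4 := congrArg (E2 (x, t)) h3
  rw [map_sub, E2_ev, E2_inc, map_zero] at h4
  exact sub_eq_zero.mp h4

lemma J_symm {n : ℕ} {f : R n} (h : f ∈ J n) : SymmP f := h.1

lemma ds_symm {n : ℕ} {f : R (n + 2)} (h : SymmP f) : SymmP (ds' n f) := by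
  rw [SymmP_iff] at h ⊢
  intro w x
  rw [E_ds, E_ds]
  let w2 : Equiv.Perm (Fin (n + 2)) := Equiv.Perm.viaFintypeEmbedding w (Fin.castAddEmb 2)
  rw [← h w2 (pt x 1 1)]
  congr 2
  funext i
  induction i using Fin.addCases with
  | left i =>
    have : w2 (Fin.castAdd 2 i) = Fin.castAdd 2 (w i) :=
      Equiv.Perm.viaFintypeEmbedding_apply_image w (Fin.castAddEmb 2) i
    rw [Function.comp_apply, this]
    have hc : ∀ (y : Fin n → ℚˣ) (j : Fin n), pt y 1 1 (Fin.castAdd 2 j) = y j := by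
      intro y j
      have : Fin.castAdd 2 j = j.castSucc.castSucc := rfl
      rw [this, pt, Fin.snoc_castSucc, Fin.snoc_castSucc]
    rw [hc, hc]; rfl
  | right i =>
    have : w2 (Fin.natAdd n i) = Fin.natAdd n i := by
      apply Equiv.Perm.viaFintypeEmbedding_apply_notMem_range
      rintro ⟨j, hj⟩
      have := congrArg Fin.val hj
      simp at this
      omega
    rw [Function.comp_apply, this]
    have hc : ∀ (y : Fin n → ℚˣ), pt y 1 1 (Fin.natAdd n i) = 1 := by
      intro y
      fin_cases i
      · have : Fin.natAdd n (0 : Fin 2) = (Fin.last n).castSucc := rfl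
        show pt y 1 1 (Fin.natAdd n (0 : Fin 2)) = 1
        rw [this, pt, Fin.snoc_castSucc, Fin.snoc_last]
      · have : Fin.natAdd n (1 : Fin 2) = Fin.last (n + 1) := rfl
        show pt y 1 1 (Fin.natAdd n (1 : Fin 2)) = 1
        rw [this, pt, Fin.snoc_last]
    rw [hc, hc]

lemma ds_mem {n : ℕ} {f : R (n + 2)} (h : f ∈ J (n + 2)) : ds' n f ∈ J n := by
  rcases n with _ | _ | n
  · exact ⟨ds_symm h.1, fun h => by omega⟩
  · exact ⟨ds_symm h.1, fun h => by omega⟩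
  · have h' := (J_iff f).mp h
    rw [J_iff]
    refine ⟨ds_symm h.1, fun x t => ?_⟩
    rw [E_ds, E_ds, ← h'.2 (pt x 1 1) t]
    let w : Equiv.Perm (Fin (n + 4)) := Equiv.swap (Fin.natAdd n 0) (Fin.natAdd n 2) *
      Equiv.swap (Fin.natAdd n 1) (Fin.natAdd n 3)
    rw [← (SymmP_iff f).mp h.1 w]
    congr 2
    have hc : ∀ (a b c d : ℚˣ) (j : Fin n), pt (pt x a b) c d (Fin.castAdd 4 j) = x j := by
      intro a b c d j
      have : Fin.castAdd 4 j = j.castSucc.castSucc.castSucc.castSucc := rfl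
      rw [this]
      simp [pt]
    have h0 : ∀ (a b c d : ℚˣ), pt (pt x a b) c d (Fin.natAdd n (0 : Fin 4)) = a := by
      intro a b c d
      have : Fin.natAdd n (0 : Fin 4) = (Fin.last n).castSucc.castSucc.castSucc := rfl
      rw [this]
      simp [pt]
    have h1 : ∀ (a b c d : ℚˣ), pt (pt x a b) c d (Fin.natAdd n (1 : Fin 4)) = b := by
      intro a b c d
      have : Fin.natAdd n (1 : Fin 4) = (Fin.last (n + 1)).castSucc.castSucc := rfl
      rw [this]
      simp [pt]
    have h2 : ∀ (a b c d : ℚˣ), pt (pt x a b) c d (Fin.natAdd n (2 : Fin 4)) = c := by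
      intro a b c d
      have : Fin.natAdd n (2 : Fin 4) = (Fin.last (n + 2)).castSucc := rfl
      rw [this]
      simp [pt]
    have h3 : ∀ (a b c d : ℚˣ), pt (pt x a b) c d (Fin.natAdd n (3 : Fin 4)) = d := by
      intro a b c d
      have : Fin.natAdd n (3 : Fin 4) = (Fin.last (n + 3)) := rfl
      rw [this]
      simp [pt]
    funext i
    rw [Function.comp_apply]
    induction i using Fin.addCases (m := n) (n := 4) with
    | left i =>
      have : w (Fin.castAdd 4 i) = Fin.castAdd 4 i := by
        have hne : ∀ k : Fin 4, Fin.castAdd 4 i ≠ Fin.natAdd n k := by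
          intro k hk
          have := congrArg Fin.val hk
          simp at this
          omega
        simp only [w, Equiv.Perm.mul_apply]
        rw [Equiv.swap_apply_of_ne_of_ne (hne _) (hne _),
          Equiv.swap_apply_of_ne_of_ne (hne _) (hne _)]
      rw [this, hc, hc]
    | right i =>
      have hw : w (Fin.natAdd n i) = Fin.natAdd n (i + 2) := by
        fin_cases i <;> simp [w, Equiv.swap_apply_def]
      rw [hw]
      fin_cases i
      · exact (h2 _ _ _ _).trans (h0 _ _ _ _).symm
      · exact (h3 _ _ _ _).trans (h1 _ _ _ _).symm
      · exact (h0 _ _ _ _).trans (h2 _ _ _ _).symm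
      · exact (h1 _ _ _ _).trans (h3 _ _ _ _).symm

lemma J_sub {n : ℕ} {f g : R (n + 2)} (hf : f ∈ J (n + 2)) (hg : g ∈ J (n + 2)) :
    f - g ∈ J (n + 2) := by
  rw [J_iff] at *
  refine ⟨fun w => by rw [map_sub, hf.1, hg.1], fun x t => ?_⟩
  rw [map_sub, map_sub, hf.2, hg.2]

lemma image_pt {n : ℕ} (x : Fin n → ℚˣ) (s t : ℚˣ) :
    Finset.univ.image (pt x s t) = insert s (insert t (Finset.univ.image x)) := by
  ext a
  simp only [Finset.mem_image, Finset.mem_univ, true_and, Finset.mem_insert, pt]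
  constructor
  · rintro ⟨i, rfl⟩
    induction i using Fin.lastCases with
    | last => right; left; simp
    | cast i =>
      induction i using Fin.lastCases with
      | last => left; simp
      | cast i => right; right; exact ⟨i, by simp⟩
  · rintro (rfl | rfl | ⟨i, rfl⟩)
    · exact ⟨(Fin.last n).castSucc, by simp⟩
    · exact ⟨Fin.last (n + 1), by simp⟩
    · exact ⟨i.castSucc.castSucc, by simp⟩

/-- `f` is the lift of `g`. -/
def IsLift {m n : ℕ} (g : R m) (f : R n) : Prop :=
  ∀ x : Fin n → ℚˣ, Function.Injective x → E x f = FF m g (Finset.univ.image x)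

/-- If the lift `h` of `g` evaluates to `p` at generic points, then it is in `J`. -/
lemma lift_mem {n : ℕ} {h : R (n + 2)} (hs : SymmP h) (p : R n)
    (hyp : ∀ x t, Function.Injective (pt x t t⁻¹) → E (pt x t t⁻¹) h = E x p) :
    h ∈ J (n + 2) ∧ ds' n h = p := by
  have h1 := generic h p hyp
  have h2 : ∀ x, E (pt x 1 1) h = E x p := fun x => by rw [← h1 x 1, inv_one]
  refine ⟨(J_iff h).mpr ⟨hs, fun x t => by rw [h1, h2]⟩, E_ext fun x => by rw [E_ds, h2]⟩

lemma FF_pt {m n : ℕ} (g : R m) (x : Fin n → ℚˣ) (t : ℚˣ) (hx : Function.Injective (pt x t t⁻¹)) :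
    FF m g (Finset.univ.image (pt x t t⁻¹)) = FF m g (Finset.univ.image x) +
      ∑ T ∈ (Finset.univ.image x).powerset, val m g (insert t (insert t⁻¹ T)) *
        wt T (Finset.univ.image x \ T) := by
  rw [pt_inj] at hx
  rw [image_pt, FF_insert]
  · simpa using hx.1.2
  · simpa using hx.2.2
  · exact hx.2.1.symm

lemma main_small {m : ℕ} (hm : m < 2) (g : R m) (hg : g ∈ J m) (n : ℕ) (f : R n)
    (hf : IsLift g f) : ∃ f' ∈ J (n + 2), ds' n f' = f := by
  obtain ⟨h, hs, hh⟩ := poly g hg.1 (n + 2)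
  refine ⟨h, lift_mem hs f fun x t hx => ?_⟩
  have hx' := (pt_inj _ _ _).mp hx
  rw [hh _ hx, FF_pt g x t hx, hf x hx'.1.1, Finset.sum_eq_zero, add_zero]
  intro T hT
  rw [val_of_card_ne, zero_mul]
  have htT : t ∉ insert t⁻¹ T := by
    intro h
    rcases Finset.mem_insert.mp h with h | h
    · exact hx'.2.1 h.symm
    · have := (Finset.mem_powerset.mp hT) h
      exact hx'.1.2 (by simpa using this)
  have htT' : t⁻¹ ∉ T := by
    intro h
    have := (Finset.mem_powerset.mp hT) h
    exact hx'.2.2 (by simpa using this)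
  rw [Finset.card_insert_of_notMem htT, Finset.card_insert_of_notMem htT']
  omega

lemma val_ds {m : ℕ} {g : R (m + 2)} (hg : g ∈ J (m + 2)) (T : Finset ℚˣ) (t : ℚˣ)
    (ht : t ∉ T) (ht' : t⁻¹ ∉ T) (htt : t ≠ t⁻¹) :
    val (m + 2) g (insert t (insert t⁻¹ T)) = val m (ds' m g) T := by
  by_cases hc : T.card = m
  · let y : Fin m → ℚˣ := fun i => ((T.equivFinOfCardEq hc).symm i : ℚˣ)
    have hy : Function.Injective y :=
      Subtype.val_injective.comp (T.equivFinOfCardEq hc).symm.injective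
    have hyT : Finset.univ.image y = T := by
      apply Finset.eq_of_subset_of_card_le
      · intro a ha
        simp only [Finset.mem_image, Finset.mem_univ, true_and] at ha
        obtain ⟨i, rfl⟩ := ha
        exact ((T.equivFinOfCardEq hc).symm i).2
      · rw [Finset.card_image_of_injective _ hy]; simp [hc]
    have hr : ∀ a, a ∈ Set.range y ↔ a ∈ T := by
      intro a; rw [← hyT]; simp
    rw [val_eq (ds_symm hg.1) y hy T hyT, E_ds, ← ((J_iff g).mp hg).2 y t]
    apply val_eq hg.1
    · rw [pt_inj, hr, hr]
      exact ⟨⟨hy, ht⟩, htt.symm, ht'⟩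
    · rw [image_pt, hyT]
  · rw [val_of_card_ne _ hc, val_of_card_ne]
    rw [Finset.card_insert_of_notMem (by simp [htt, ht]), Finset.card_insert_of_notMem ht']
    omega

lemma main_lift (m : ℕ) : ∀ (g : R m), g ∈ J m → ∀ (n : ℕ) (f : R n),
    IsLift g f → ∃ f' ∈ J (n + 2), ds' n f' = f := by
  induction m using Nat.strong_induction_on with
  | _ m ih =>
    intro g hg n f hf
    rcases Nat.lt_or_ge m 2 with hm | hm
    · exact main_small hm g hg n f hf
    · obtain ⟨m, rfl⟩ : ∃ k, m = k + 2 := ⟨m - 2, by omega⟩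
      obtain ⟨h, hs, hh⟩ := poly g hg.1 (n + 2)
      obtain ⟨f2, hs2, hh2⟩ := poly (ds' m g) (ds_symm hg.1) n
      obtain ⟨f3, hf3, hf3'⟩ := ih m (by omega) (ds' m g) (ds_mem hg) n f2 hh2
      have key : h ∈ J (n + 2) ∧ ds' n h = f + f2 := by
        refine lift_mem hs _ fun x t hx => ?_
        have hx' := (pt_inj _ _ _).mp hx
        rw [hh _ hx, FF_pt g x t hx, map_add, hf x hx'.1.1, hh2 x hx'.1.1, FF.eq_1 m]
        congr 1
        refine Finset.sum_congr rfl fun T hT => ?_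
        rw [val_ds hg]
        · intro h
          have := (Finset.mem_powerset.mp hT) h
          exact hx'.1.2 (by simpa using this)
        · intro h
          have := (Finset.mem_powerset.mp hT) h
          exact hx'.2.2 (by simpa using this)
        · exact hx'.2.1.symm
      exact ⟨h - f3, J_sub key.1 hf3, by rw [map_sub, key.2, hf3']; ring⟩

lemma isLift_self {m : ℕ} (g : R m) (hg : SymmP g) : IsLift g g := by
  intro x hx
  have hc : (Finset.univ.image x).card = m := by
    rw [Finset.card_image_of_injective _ hx]; simp
  rw [FF, Finset.sum_eq_single (Finset.univ.image x)]
  · rw [val_eq hg x hx _ rfl]; simp [wt]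
  · intro T hT hne
    rw [val_of_card_ne, zero_mul]
    intro h
    exact hne (Finset.eq_of_subset_of_card_le (Finset.mem_powerset.mp hT) (by omega))
  · intro h; simp at h

lemma ds_surj (N : ℕ) (hN : 2 ≤ N) : ∀ g ∈ J (N - 2), ∃ f ∈ J N, ds N f = g := by
  obtain ⟨n, rfl⟩ : ∃ k, N = k + 2 := ⟨N - 2, by omega⟩
  intro g hg
  exact main_lift n g hg n g (isLift_self g hg.1)

/-- For all `n, k` with `0 ≤ 2k ≤ n`, the iterated map
`dsₙ^{(k)} : Jₙ → J_{n-2k}` is surjective. -/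
theorem dsIter_surjective (n k : ℕ) (hkn : 2 * k ≤ n) :
    ∀ g ∈ J (n - 2 * k), ∃ f ∈ J n, dsIter n k f = g := by
  induction k with
  | zero => exact fun g hg => ⟨g, hg, rfl⟩
  | succ k ih =>
    intro g hg
    obtain ⟨f1, hf1, h1⟩ := ds_surj (n - 2 * k) (by omega) g hg
    obtain ⟨f, hf, h2⟩ := ih (by omega) f1 hf1
    refine ⟨f, hf, ?_⟩
    change ds (n - 2 * k) (dsIter n k f) = g
    rw [h2, h1]

end
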